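/- A prime p is a Wilson prime if and only if p·B_{p-1} ≡ p − 1 (mod p²) (as a congruence of rational numbers, i.e., p² divides the numerator of p·B_{p-1} − p + 1 in lowest terms). -/

import Mathlib

/-!
Write `S = ∑_{a<p} a^(p-1)`. For odd `p` both sides of the test are compared with `S` modulo `p²`,
which gives `p * B_{p-1} - p + 1 ≡ (p-1)! + 1` (Glaisher's congruence).

* Faulhaber's formula expands `S` as `p * B_{p-1}` plus the terms
  `B_i * C(p,i) * p^(p-1-i)` with `i < p - 1`. Each of these is `p²` times a `p`-integral number:
  `B_i` is `p`-integral (`bernoulli_mem`), `p` divides `C(p,i)` for `0 < i < p`, and the remaining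
  power of `p` is positive (`exists_faulhaber`).
* By Fermat, `a^(p-1) = 1 + x_a` with `p ∣ x_a` for `0 < a < p`, so modulo `p²` the product
  `((p-1)!)^(p-1)` is `1 + ∑ x_a`. By Wilson, `(p-1)! = -1 + y` with `p ∣ y`, so the same power is
  `1 - (p-1) y ≡ 1 + y`. Hence `S - (p-1) ≡ (p-1)! + 1` (`sum_pow_congr`).

The prime `2` is checked directly.
-/

/-- The ring `ℤ_(p)` of rational numbers whose denominator is prime to `p`. -/
noncomputable def pIntegers (p : ℕ) [Fact p.Prime] : Subring ℚ := (Rat.padicValuation p).integer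

lemma mem_pIntegers {p : ℕ} [Fact p.Prime] {x : ℚ} : x ∈ pIntegers p ↔ ¬ p ∣ x.den := by
  rw [← Rat.padicValuation_le_one_iff]
  exact Valuation.mem_integer_iff _ _

lemma inv_natCast_mem {p : ℕ} [Fact p.Prime] {n : ℕ} (h0 : 0 < n) (hn : n < p) :
    (n : ℚ)⁻¹ ∈ pIntegers p := by
  rw [mem_pIntegers, Rat.inv_natCast_den_of_pos h0]
  exact Nat.not_dvd_of_pos_of_lt h0 hn

/-- In the recursion for `B'_n` the only denominators are at most `n + 1`, hence prime to `p`. -/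
lemma bernoulli'_mem {p : ℕ} [Fact p.Prime] (n : ℕ) (hn : n + 1 < p) :
    bernoulli' n ∈ pIntegers p := by
  induction n using Nat.strong_induction_on with
  | _ n ih =>
    rw [bernoulli'_def]
    refine sub_mem (one_mem _) (sum_mem fun k hk => ?_)
    rw [Finset.mem_range] at hk
    refine mul_mem ?_ (ih k hk (by omega))
    rw [div_eq_mul_inv]
    refine mul_mem (natCast_mem _ _) ?_
    have h := inv_natCast_mem (p := p) (n := n - k + 1) (by omega) (by omega)
    rwa [Nat.cast_add, Nat.cast_sub hk.le, Nat.cast_one] at h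

lemma bernoulli_mem {p : ℕ} [Fact p.Prime] (n : ℕ) (hn : n + 1 < p) :
    bernoulli n ∈ pIntegers p := by
  rw [bernoulli]
  exact mul_mem (pow_mem (neg_mem (one_mem _)) _) (bernoulli'_mem n hn)

lemma exists_faulhaber {p : ℕ} [Fact p.Prime] (h3 : 3 ≤ p) :
    ∃ t ∈ pIntegers p,
      ∑ a ∈ Finset.range p, (a : ℚ) ^ (p - 1) = p * bernoulli (p - 1) + p ^ 2 * t := by
  have hp : p.Prime := Fact.out
  have hp0 : (p : ℚ) ≠ 0 := by exact_mod_cast hp.ne_zero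
  have hterm : ∀ i ∈ Finset.range (p - 1), ∃ t ∈ pIntegers p,
      bernoulli i * (p.choose i) * (p : ℚ) ^ (p - i) / p = p ^ 2 * t := by
    intro i hi
    rw [Finset.mem_range] at hi
    rcases Nat.eq_zero_or_pos i with rfl | hi0
    · refine ⟨(p : ℚ) ^ (p - 3), pow_mem (natCast_mem _ _) _, ?_⟩
      obtain ⟨q, hq⟩ := Nat.exists_eq_add_of_le h3
      rw [show p - 0 = q + 3 by omega, show p - 3 = q by omega]
      simp only [bernoulli_zero, Nat.choose_zero_right, Nat.cast_one]
      field_simp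
      ring
    · obtain ⟨c, hc⟩ := hp.dvd_choose_self hi0.ne' (by omega)
      refine ⟨bernoulli i * c * (p : ℚ) ^ (p - i - 2),
        mul_mem (mul_mem (bernoulli_mem i (by omega)) (natCast_mem _ _))
          (pow_mem (natCast_mem _ _) _), ?_⟩
      rw [show p - i = (p - i - 2) + 2 by omega, hc, Nat.cast_mul, pow_add]
      simp only [Nat.add_sub_cancel]
      field_simp
  choose! t ht hteq using hterm
  refine ⟨∑ i ∈ Finset.range (p - 1), t i, sum_mem ht, ?_⟩
  have h1 : p - 1 + 1 = p := by omega
  have hcast : ((p - 1 : ℕ) : ℚ) + 1 = p := by exact_mod_cast h1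
  rw [sum_range_pow, Finset.sum_range_succ, hcast, h1, Finset.sum_congr rfl hteq,
    ← Finset.mul_sum, show p - (p - 1) = 1 by omega,
    show p.choose (p - 1) = p by rw [Nat.choose_symm (by omega : 1 ≤ p), Nat.choose_one_right]]
  field_simp
  ring

lemma prod_one_add_modEq {ι : Type*} (s : Finset ι) (x : ι → ℤ) (p : ℤ)
    (hx : ∀ a ∈ s, p ∣ x a) :
    ∏ a ∈ s, (1 + x a) ≡ 1 + ∑ a ∈ s, x a [ZMOD p ^ 2] := by
  classical
  induction s using Finset.induction_on with
  | empty => simp [Int.ModEq.refl]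
  | insert a s ha ih =>
    rw [Finset.prod_insert ha, Finset.sum_insert ha]
    obtain ⟨c, hc⟩ := hx a (Finset.mem_insert_self a s)
    obtain ⟨d, hd⟩ : p ∣ ∑ a ∈ s, x a :=
      Finset.dvd_sum fun b hb => hx b (Finset.mem_insert_of_mem hb)
    refine ((ih fun b hb => hx b (Finset.mem_insert_of_mem hb)).mul_left _).trans ?_
    rw [hc, hd]
    exact (Int.modEq_iff_dvd.2 ⟨-(c * d), by ring⟩)

lemma sum_pow_congr {p : ℕ} [Fact p.Prime] (h3 : 3 ≤ p) :
    ∑ a ∈ Finset.range p, (a : ℤ) ^ (p - 1) - (p - 1) ≡ ((p - 1).factorial : ℤ) + 1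
      [ZMOD (p : ℤ) ^ 2] := by
  have hp : p.Prime := Fact.out
  have hodd : Even (p - 1) := hp.even_sub_one (by omega)
  have hfermat : ∀ a ∈ Finset.Ico 1 p, (p : ℤ) ∣ (a : ℤ) ^ (p - 1) - 1 := by
    intro a ha
    rw [Finset.mem_Ico] at ha
    refine (Int.ModEq.pow_card_sub_one_eq_one hp ?_).symm.dvd
    rw [Nat.isCoprime_iff_coprime, Nat.coprime_comm, hp.coprime_iff_not_dvd]
    exact Nat.not_dvd_of_pos_of_lt ha.1 ha.2
  have hwilson : (p : ℤ) ∣ ((p - 1).factorial : ℤ) + 1 := by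
    rw [← ZMod.intCast_zmod_eq_zero_iff_dvd]
    push_cast
    rw [ZMod.wilsons_lemma]
    ring
  obtain ⟨w, hw⟩ := hwilson
  have hprod : ((p - 1).factorial : ℤ) ^ (p - 1)
      = ∏ a ∈ Finset.Ico 1 p, (1 + ((a : ℤ) ^ (p - 1) - 1)) := by
    have : (p - 1).factorial = ∏ a ∈ Finset.Ico 1 p, a := by
      rw [← Finset.prod_Ico_id_eq_factorial, Nat.sub_add_cancel hp.one_le]
    rw [this]
    push_cast
    rw [← Finset.prod_pow]
    simp
  have hleft := prod_one_add_modEq _ _ _ hfermat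
  rw [← hprod] at hleft
  -- As `p - 1` is even, `((p-1)!)^(p-1) = (-(p-1)!)^(p-1)` is a product of `p - 1` equal factors `1 - p w`.
  have hright := prod_one_add_modEq (Finset.range (p - 1)) (fun _ => -(p * w)) p
    (fun _ _ => ⟨-w, by ring⟩)
  have hfac : (1 + -(p * w) : ℤ) = -((p - 1).factorial : ℤ) := by linarith
  simp only [Finset.prod_const, Finset.sum_const, Finset.card_range, nsmul_eq_mul] at hright
  rw [hfac, hodd.neg_pow] at hright
  have hsum : ∑ a ∈ Finset.range p, (a : ℤ) ^ (p - 1) - (p - 1)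
      = ∑ a ∈ Finset.Ico 1 p, ((a : ℤ) ^ (p - 1) - 1) := by
    rw [Finset.range_eq_Ico, Finset.sum_eq_sum_Ico_succ_bot hp.pos, Finset.sum_sub_distrib]
    simp [Nat.cast_sub hp.one_le, zero_pow (show p - 1 ≠ 0 by omega)]
  rw [hsum, hw]
  have h := Int.ModEq.add_left_cancel' 1 (hleft.symm.trans hright)
  refine h.trans (Int.modEq_iff_dvd.2 ⟨w, ?_⟩)
  rw [Nat.cast_sub hp.one_le]
  push_cast
  ring

/-- A congruence modulo `p²` in `ℤ_(p)` between a rational number and an integer lets divisibility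
of the numerator be read off from the integer. -/
lemma sq_dvd_num_iff {p : ℕ} [Fact p.Prime] {x t : ℚ} {N : ℤ} (ht : t ∈ pIntegers p)
    (hx : x = N + p ^ 2 * t) : (p : ℤ) ^ 2 ∣ x.num ↔ (p : ℤ) ^ 2 ∣ N := by
  have hp : p.Prime := Fact.out
  have hcop : ∀ y ∈ pIntegers p, IsCoprime ((p : ℤ) ^ 2) (y.den : ℤ) := by
    intro y hy
    exact (Nat.isCoprime_iff_coprime.2 ((hp.coprime_iff_not_dvd).2 (mem_pIntegers.1 hy))).pow_left
  have hxm : x ∈ pIntegers p := by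
    rw [hx]
    exact add_mem (intCast_mem _ _) (mul_mem (pow_mem (natCast_mem _ _) _) ht)
  have key : x.num * t.den = x.den * (N * t.den + p ^ 2 * t.num) := by
    have h1 : (x.den : ℚ) ≠ 0 := by exact_mod_cast x.den_nz
    have h2 : (t.den : ℚ) ≠ 0 := by exact_mod_cast t.den_nz
    rw [← Rat.num_div_den x, ← Rat.num_div_den t] at hx
    field_simp at hx
    have hx' : (x.num : ℚ) * t.den = x.den * (N * t.den + p ^ 2 * t.num) := by linarith
    exact_mod_cast hx'
  constructor
  · intro h
    have h1 := (hcop x hxm).dvd_of_dvd_mul_left (key ▸ h.mul_right _)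
    exact (hcop t ht).dvd_of_dvd_mul_right ((dvd_add_left (dvd_mul_right _ _)).1 h1)
  · intro h
    refine (hcop t ht).dvd_of_dvd_mul_right ?_
    rw [key]
    exact ((h.mul_right _).add (dvd_mul_right _ _)).mul_left _

theorem lehmer_wilson_test (p : ℕ) (hp : p.Prime) :
    p ^ 2 ∣ (p - 1).factorial + 1 ↔
      ((p : ℤ) ^ 2) ∣ ((p : ℚ) * bernoulli (p - 1) - p + 1).num := by
  have : Fact p.Prime := ⟨hp⟩
  rcases hp.two_le.eq_or_lt with rfl | h3
  · norm_num [bernoulli_one]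
  obtain ⟨t, ht, hS⟩ := exists_faulhaber (p := p) h3
  obtain ⟨c, hc⟩ := (sum_pow_congr (p := p) h3).dvd
  rw [sq_dvd_num_iff (N := ((p - 1).factorial : ℤ) + 1) (t := -t - c)
    (sub_mem (neg_mem ht) (intCast_mem _ _))]
  · exact_mod_cast Iff.rfl
  · have hc' := congrArg (Int.cast : ℤ → ℚ) hc
    push_cast at hc' ⊢
    linarith
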